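/- Let k be a field, (R,m) a Noetherian local k-algebra, K a field extension of k, and ψ : R → K[[t]] a k-algebra homomorphism with ψ(m) ⊆ (t) and ψ(m) ≠ 0; let ord(ψ) denote the largest integer n with ψ(m) ⊆ (t^n). For a Rees algebra G over R, let ψ(G) denote the Rees algebra over K[[t]] generated by all elements ψ(g)W^l, where gW^l runs over the homogeneous elements of G with ψ(g) ≠ 0. Then ord(ψ(G)) ≥ ord(G) · ord(ψ), where ord(ψ(G)) is the order at the closed point (t) of K[[t]] and ord(G) the order at the closed point of R. -/

import Mathlib

open Polynomial
open scoped ENNReal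

noncomputable section

namespace NashMult

/-- The `m`-adic order `ν(f)` of an element `f` of a ring: the largest `n` with `f ∈ m ^ n`. -/
def adicOrder {R : Type*} [CommRing R] (m : Ideal R) (f : R) : ℕ :=
  sSup {n : ℕ | f ∈ m ^ n}

/-- A subalgebra `G ⊆ R[W]` is *graded* if it is spanned by its "monomials", i.e. it is closed
under taking homogeneous components.  This is the condition expressing that `G = ⊕ I_l W^l`
for a family of ideals `I_l` (with `I_0 = R` and `I_i · I_j ⊆ I_{i+j}` automatic). -/
def Graded {R : Type*} [CommRing R] (G : Subalgebra R (Polynomial R)) : Prop :=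
  ∀ p ∈ G, ∀ n : ℕ, (C (p.coeff n) * X ^ n : Polynomial R) ∈ G

/-- A *Rees algebra* over `R`: a finitely generated graded subalgebra of `R[W]`. -/
def IsReesAlgebra {R : Type*} [CommRing R] (G : Subalgebra R (Polynomial R)) : Prop :=
  G.FG ∧ Graded G

/-- The order of (the Rees algebra) `G` at the closed point of the local ring `(R, m)`:
`ord(G) = inf { ν(f)/n : f W^n a homogeneous element of G, n ≥ 1, f ≠ 0 }`
(with value `∞` for the empty infimum). -/
def reesOrder {R : Type*} [CommRing R] (m : Ideal R) (G : Subalgebra R (Polynomial R)) : ℝ≥0∞ :=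
  sInf {q : ℝ≥0∞ | ∃ (f : R) (n : ℕ), f ≠ 0 ∧ 1 ≤ n ∧ (C f * X ^ n : Polynomial R) ∈ G ∧
    q = (adicOrder m f : ℝ≥0∞) / (n : ℝ≥0∞)}

/-- `G = ⊕ I_l W^l` is *differentially closed* relative to a family `D` of derivations if
`I_{l+1} ⊆ I_l` and `D_j (I_l) ⊆ I_{l-1}` for all `l ≥ 1` and all `j`. -/
def DiffClosed {k R ι : Type*} [CommRing k] [CommRing R] [Algebra k R]
    (D : ι → Derivation k R R) (G : Subalgebra R (Polynomial R)) : Prop :=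
  (∀ (f : R) (l : ℕ), 1 ≤ l → (C f * X ^ (l + 1) : Polynomial R) ∈ G →
      (C f * X ^ l : Polynomial R) ∈ G) ∧
  (∀ (f : R) (l : ℕ) (j : ι), (C f * X ^ (l + 1) : Polynomial R) ∈ G →
      (C (D j f) * X ^ l : Polynomial R) ∈ G)

/-- `Diff(M)`: the smallest graded differentially closed subalgebra of `R[W]` containing the
set `M`. -/
def diffClosure {k R ι : Type*} [CommRing k] [CommRing R] [Algebra k R]
    (D : ι → Derivation k R R) (M : Set (Polynomial R)) : Subalgebra R (Polynomial R) :=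
  sInf {G : Subalgebra R (Polynomial R) | M ⊆ ↑G ∧ Graded G ∧ DiffClosed D G}

/-- The image `ψ(G)` of a Rees algebra `G` over `R` under a homomorphism (arc) `ψ : R → K⟦t⟧`:
the Rees algebra over `K⟦t⟧` generated by all `ψ(g) W^l` for `g W^l` a homogeneous element of
`G` with `ψ(g) ≠ 0`. -/
def arcImage {R A : Type*} [CommRing R] [CommRing A] (ψ : R → A)
    (G : Subalgebra R (Polynomial R)) : Subalgebra A (Polynomial A) :=
  Algebra.adjoin A {p : Polynomial A | ∃ (g : R) (l : ℕ),
    (C g * X ^ l : Polynomial R) ∈ G ∧ ψ g ≠ 0 ∧ p = C (ψ g) * X ^ l}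

/-- The order `ord(ψ)` of an arc `ψ : R → K⟦t⟧`: the largest `n` such that
`ψ(m) ⊆ t^n` (`t` being the ideal `tI`). -/
def homOrd {R A : Type*} [CommRing R] [CommRing A] (m : Ideal R) (tI : Ideal A)
    (ψ : R → A) : ℕ :=
  sSup {n : ℕ | ∀ s ∈ m, ψ s ∈ tI ^ n}

/-- The maximal ideal `(t)` of `K⟦t⟧`. -/
def tId (K : Type*) [CommRing K] : Ideal (PowerSeries K) :=
  Ideal.span {(PowerSeries.X : PowerSeries K)}

/-- The `t`-adic order on `K⟦t⟧`. -/
def tOrd {K : Type*} [CommRing K] (g : PowerSeries K) : ℕ :=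
  adicOrder (tId K) g

/-- The family of ideals `I_l` of the graded algebra `G = ⊕ I_l W^l`. -/
def idealFam {R : Type*} [CommRing R] (G : Subalgebra R (Polynomial R)) (l : ℕ) : Ideal R :=
  Submodule.comap (Polynomial.monomial l : R →ₗ[R] Polynomial R) (Subalgebra.toSubmodule G)

/-- The closed point of the local ring `(R, m)` belongs to the singular locus of
`G = ⊕ I_l W^l`, i.e. `ν(I_l) ≥ l` for all `l ≥ 1`. -/
def SingFam {R : Type*} [CommRing R] (m : Ideal R) (I : ℕ → Ideal R) : Prop :=
  ∀ l : ℕ, 1 ≤ l → I l ≤ m ^ l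

/-- The transform `⊕ (I_l · T^{-l}) W^l` of a Rees algebra `⊕ I_l W^l` over a DVR with
uniformizer `T` (when the closed point lies in the singular locus, `I_l ⊆ (T^l)` and
`I_l · T^{-l} = (I_l : (T^l))`). -/
def transformFam {R : Type*} [CommRing R] (T : R) (I : ℕ → Ideal R) : ℕ → Ideal R :=
  fun l => (I l).colon (Ideal.span {T ^ l})

/-- The persistance: the least number `κ` of transforms needed so that the closed point no
longer lies in the singular locus. -/
def persist {R : Type*} [CommRing R] (m : Ideal R) (T : R)
    (G : Subalgebra R (Polynomial R)) : ℕ :=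
  sInf {κ : ℕ | ¬ SingFam m ((transformFam T)^[κ] (idealFam G))}

/-- The set of elements of a ring integral over a subset `s` (monic equation with
coefficients in `s`). -/
def intClos {A : Type*} [CommRing A] (s : Set A) : Set A :=
  {p : A | ∃ q : Polynomial A, q.Monic ∧ (∀ n, q.coeff n ∈ s) ∧ Polynomial.eval p q = 0}


/-- The monic polynomial `f = x^b + B_{b-2} x^{b-2} + ⋯ + B_1 x + B_0` with coefficients
`B_j = Bc j` (only `j ≤ b - 2` is relevant). -/
def minPolyOf {S : Type*} [CommRing S] (b : ℕ) (Bc : ℕ → S) : Polynomial S :=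
  Polynomial.X ^ b + ∑ j ∈ Finset.range (b - 1), Polynomial.C (Bc j) * Polynomial.X ^ j


theorem mem_tId_pow {K : Type*} [Field K] (n : ℕ) (f : PowerSeries K) :
    f ∈ tId K ^ n ↔ (n : ℕ∞) ≤ f.order := by
  rw [tId, Ideal.span_singleton_pow, Ideal.mem_span_singleton, PowerSeries.X_pow_dvd_iff]
  constructor
  · exact fun h => PowerSeries.nat_le_order f n h
  · exact fun h m hm => PowerSeries.coeff_of_lt_order m (lt_of_lt_of_le (by exact_mod_cast hm) h)

theorem natSup_mem (S : Set ℕ) (h0 : 0 ∈ S) : sSup S ∈ S := by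
  by_cases hb : BddAbove S
  · exact Nat.sSup_mem ⟨0, h0⟩ hb
  · rwa [Nat.sSup_of_not_bddAbove hb]

theorem mem_adicOrder {R : Type*} [CommRing R] (m : Ideal R) (f : R) :
    f ∈ m ^ adicOrder m f :=
  natSup_mem {n : ℕ | f ∈ m ^ n} (by simp)

theorem mem_homOrd {R A : Type*} [CommRing R] [CommRing A] (m : Ideal R) (tI : Ideal A)
    (ψ : R → A) : ∀ s ∈ m, ψ s ∈ tI ^ homOrd m tI ψ :=
  natSup_mem {n : ℕ | ∀ s ∈ m, ψ s ∈ tI ^ n} (by simp)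

theorem order_le_adicOrder {K : Type*} [Field K] (f : PowerSeries K) (hf : f ≠ 0) :
    (f.order : ℝ≥0∞) ≤ (adicOrder (tId K) f : ℝ≥0∞) := by
  have hfin : f.order ≠ ⊤ := by simpa using hf
  obtain ⟨N, hN⟩ := ENat.ne_top_iff_exists.mp hfin
  have hle : N ≤ adicOrder (tId K) f := by
    apply le_csSup
    · refine ⟨N, fun n hn => ?_⟩
      have := (mem_tId_pow n f).1 hn
      rw [← hN] at this
      exact_mod_cast this
    · exact (mem_tId_pow N f).2 hN.le
  rw [← hN]
  simpa using hle

theorem arcImage_coeff {R K : Type*} [CommRing R] [Field K] (ψ : R → PowerSeries K)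
    (G : Subalgebra R (Polynomial R)) (c : ℝ≥0∞)
    (hgen : ∀ (g : R) (l : ℕ), (C g * X ^ l : Polynomial R) ∈ G → ψ g ≠ 0 →
      c * l ≤ ((ψ g).order : ℝ≥0∞))
    (p : Polynomial (PowerSeries K)) (hp : p ∈ arcImage ψ G) :
    ∀ n : ℕ, c * n ≤ ((p.coeff n).order : ℝ≥0∞) := by
  have add_aux : ∀ (d : ℝ≥0∞) (x y : PowerSeries K), d ≤ (x.order : ℝ≥0∞) →
      d ≤ (y.order : ℝ≥0∞) → d ≤ ((x + y).order : ℝ≥0∞) := by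
    intro d x y hx hy
    refine le_trans ?_ (ENat.toENNReal_le.2 (PowerSeries.min_order_le_order_add x y))
    rcases le_total x.order y.order with h | h
    · rwa [min_eq_left h]
    · rwa [min_eq_right h]
  unfold arcImage at hp
  induction hp using Algebra.adjoin_induction with
  | mem x hx =>
    obtain ⟨g, l, hg, h0, rfl⟩ := hx
    intro n
    rw [coeff_C_mul_X_pow]
    split_ifs with h
    · subst h; exact hgen g _ hg h0
    · simp
  | algebraMap r =>
    intro n
    rw [Polynomial.algebraMap_apply, coeff_C]
    split_ifs with h
    · subst h; simp
    · simp
  | add x y _ _ hx hy =>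
    intro n
    rw [coeff_add]
    exact add_aux _ _ _ (hx n) (hy n)
  | mul x y _ _ hx hy =>
    intro n
    rw [coeff_mul]
    refine Finset.sum_induction _ (fun z : PowerSeries K => c * n ≤ (z.order : ℝ≥0∞))
      (add_aux _) (by simp) ?_
    rintro ⟨i, j⟩ hij
    rw [Finset.HasAntidiagonal.mem_antidiagonal] at hij
    simp only at hij ⊢
    rw [PowerSeries.order_mul, ENat.toENNReal_add, ← hij, Nat.cast_add, mul_add]
    exact add_le_add (hx i) (hy j)

/-- (Lemma `lema:arcos_diagonales`, general form.)  Let `(R, m)` be a Noetherian local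
`k`-algebra and `ψ : R → K⟦t⟧` a `k`-algebra homomorphism with `0 ≠ ψ(m) ⊆ (t)`.  For any
Rees algebra `G` over `R`, the order at the closed point `(t)` of the image Rees algebra
`ψ(G)` satisfies `ord(ψ(G)) ≥ ord(G) · ord(ψ)`. -/
theorem arc_image_order_ge
    (k : Type) [Field k]
    (R : Type) [CommRing R] [IsNoetherianRing R] [IsLocalRing R] [Algebra k R]
    (K : Type) [Field K] [Algebra k K]
    (ψ : R →ₐ[k] PowerSeries K)
    (hψmem : ∀ s ∈ IsLocalRing.maximalIdeal R, ψ s ∈ tId K)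
    (hψne : ∃ s ∈ IsLocalRing.maximalIdeal R, ψ s ≠ 0)
    (G : Subalgebra R (Polynomial R)) (hG : IsReesAlgebra G) :
    reesOrder (IsLocalRing.maximalIdeal R) G *
        (homOrd (IsLocalRing.maximalIdeal R) (tId K) ψ : ℝ≥0∞) ≤
      reesOrder (tId K) (arcImage (⇑ψ) G) := by
  set m := IsLocalRing.maximalIdeal R
  set h := homOrd m (tId K) ψ with hh
  have hmap : Ideal.map ψ.toRingHom m ≤ tId K ^ h := by
    rw [Ideal.map_le_iff_le_comap]
    exact fun s hs => mem_homOrd m (tId K) ψ s hs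
  have hgen : ∀ (g : R) (l : ℕ), (C g * X ^ l : Polynomial R) ∈ G → ψ g ≠ 0 →
      reesOrder m G * h * l ≤ ((ψ g).order : ℝ≥0∞) := by
    intro g l hg h0
    rcases Nat.eq_zero_or_pos l with rfl | hl
    · simp
    have hg0 : g ≠ 0 := fun e => h0 (by simp [e])
    have h1 : reesOrder m G ≤ (adicOrder m g : ℝ≥0∞) / (l : ℝ≥0∞) :=
      sInf_le ⟨g, l, hg0, hl, hg, rfl⟩
    have h2 : reesOrder m G * l ≤ (adicOrder m g : ℝ≥0∞) :=
      (ENNReal.le_div_iff_mul_le (Or.inl (by simp; omega)) (Or.inl (by simp))).1 h1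
    have h3 : ψ g ∈ tId K ^ (h * adicOrder m g) := by
      rw [pow_mul]
      refine Ideal.pow_right_mono hmap _ ?_
      rw [← Ideal.map_pow]
      exact Ideal.mem_map_of_mem ψ.toRingHom (mem_adicOrder m g)
    have h4 := ENat.toENNReal_le.2 ((mem_tId_pow _ _).1 h3)
    calc reesOrder m G * h * l = h * (reesOrder m G * l) := by ring
      _ ≤ h * adicOrder m g := by gcongr
      _ ≤ _ := by simpa using h4
  refine le_sInf ?_
  rintro q ⟨f, n, hf, hn, hfG, rfl⟩
  have h5 := arcImage_coeff ψ G _ hgen _ hfG n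
  rw [coeff_C_mul_X_pow, if_pos rfl] at h5
  rw [ENNReal.le_div_iff_mul_le (Or.inl (by simp; omega)) (Or.inl (by simp))]
  exact h5.trans (order_le_adicOrder f hf)

end NashMult
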